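/- arXiv:1812.08439 — 2 statements merged into one kernel-verified Lean document; each statement's English description precedes it below -/
import Mathlib

section
/- Let H ⊆ 𝔽₂⁸ be the extended Hamming code. Then the lattice Γ_H = (1/√2)·ρ⁻¹(H) ⊆ ℝ⁸ is even (x•x ∈ 2ℤ for all x ∈ Γ_H), unimodular (Γ_H equals its dual lattice {y ∈ ℝ⁸ : y•x ∈ ℤ for all x ∈ Γ_H}), and contains exactly 240 vectors x with x•x = 2 (this is the number of roots of the root system E₈). -/
open scoped BigOperators

/-- The lattice `Γ_C = (1/√2)·ρ⁻¹(C) ⊆ ℝⁿ` associated to a binary code `C ⊆ 𝔽₂ⁿ`,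
where `ρ : ℤⁿ → 𝔽₂ⁿ` is componentwise reduction modulo `2`. -/
def codeLattice {n : ℕ} (C : Set (Fin n → ZMod 2)) : Set (Fin n → ℝ) :=
  {x | ∃ z : Fin n → ℤ, (fun i => (z i : ZMod 2)) ∈ C ∧
      ∀ i, x i = (z i : ℝ) / Real.sqrt 2}

/-- The extended Hamming `[8,4,4]` binary linear code. -/
def extendedHammingCode : Submodule (ZMod 2) (Fin 8 → ZMod 2) :=
  Submodule.span (ZMod 2)
    {![1,1,1,1,0,0,0,0], ![1,1,0,0,1,1,0,0], ![1,0,1,0,1,0,1,0], ![0,1,1,0,1,0,0,1]}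

/-!
Writing `x = z / √2` turns questions about `Γ_C` into questions about integer vectors `z` and their
reductions modulo `2`. Integrality of `x • y` becomes orthogonality of the reductions, so the dual
lattice of `Γ_C` is the lattice of the dual code. Since a square is `0` or `1` modulo `4`, the norm
`z • z` is congruent modulo `4` to the weight of the reduction of `z` and at least as large; hence
doubly even codes give even lattices, and a vector with `x • x = 2`, that is `z • z = 4`, reduces
either to `0` (and is then `±2` times a unit vector) or to a word of weight `4` (and then has
entries `±1` on its support). This yields `2 n + 16 A₄` roots, where `A₄` is the number of words of
weight `4`; for the extended Hamming code this is `2 · 8 + 16 · 14 = 240`.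
-/

open Finset

section IntegerVectors

variable {ι : Type*}

/-- The componentwise reduction `ρ : ℤ^ι → 𝔽₂^ι`. -/
def modTwo (z : ι → ℤ) : ι → ZMod 2 := fun i => z i

/-- The embedding `z ↦ (1/√2)·z` of integer vectors into `ℝ^ι`, whose image contains every
`Γ_C`. -/
noncomputable def divSqrtTwo (z : ι → ℤ) : ι → ℝ := fun i => z i / √2

lemma modTwo_surjective : Function.Surjective (modTwo : (ι → ℤ) → ι → ZMod 2) :=
  ZMod.intCast_surjective.comp_left

lemma divSqrtTwo_injective : Function.Injective (divSqrtTwo : (ι → ℤ) → ι → ℝ) := by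
  intro z w h
  funext i
  have hi : (z i : ℝ) / √2 = w i / √2 := congrFun h i
  exact_mod_cast (div_left_inj' (by positivity)).1 hi

lemma modTwo_eq_zero_iff {z : ι → ℤ} : modTwo z = 0 ↔ ∀ i, Even (z i) := by
  simp only [funext_iff, modTwo, Pi.zero_apply, ZMod.intCast_eq_zero_iff_even]

section Single

variable [DecidableEq ι]

lemma modTwo_single {a : ℤ} (ha : Even a) (i : ι) : modTwo (Pi.single i a) = 0 := by
  refine modTwo_eq_zero_iff.2 fun j => ?_
  obtain rfl | hj := eq_or_ne j i
  · rwa [Pi.single_eq_same]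
  · simp [hj]

lemma divSqrtTwo_single (i : ι) (a : ℤ) :
    divSqrtTwo (Pi.single i a) = Pi.single i ((a : ℝ) / √2) := by
  funext j
  obtain rfl | hj := eq_or_ne j i
  · simp [divSqrtTwo]
  · simp [divSqrtTwo, hj]

end Single

lemma ite_modTwo_le_mul_self (z : ι → ℤ) (i : ι) :
    (if modTwo z i = 0 then 0 else 1) ≤ z i * z i := by
  split_ifs with hi
  · exact mul_self_nonneg _
  · have hz : z i ≠ 0 := fun h => hi (by simp [modTwo, h])
    exact Int.add_one_le_of_lt (mul_self_pos.2 hz)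

variable [Fintype ι]

lemma divSqrtTwo_dotProduct (z w : ι → ℤ) :
    divSqrtTwo z ⬝ᵥ divSqrtTwo w = ((z ⬝ᵥ w : ℤ) : ℝ) / 2 := by
  simp only [dotProduct, divSqrtTwo, div_mul_div_comm, Real.mul_self_sqrt zero_le_two, ← sum_div]
  push_cast
  rfl

lemma modTwo_dotProduct (z w : ι → ℤ) : modTwo z ⬝ᵥ modTwo w = ((z ⬝ᵥ w : ℤ) : ZMod 2) :=
  ((Int.castRingHom (ZMod 2)).map_dotProduct z w).symm

lemma exists_divSqrtTwo_dotProduct_eq_intCast_iff (z w : ι → ℤ) :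
    (∃ m : ℤ, divSqrtTwo z ⬝ᵥ divSqrtTwo w = m) ↔ modTwo z ⬝ᵥ modTwo w = 0 := by
  rw [modTwo_dotProduct, ZMod.intCast_eq_zero_iff_even, even_iff_exists_two_mul,
    divSqrtTwo_dotProduct]
  refine exists_congr fun m => ?_
  rw [div_eq_iff two_ne_zero, mul_comm (m : ℝ)]
  norm_cast

lemma natCast_hammingNorm {R : Type*} [AddCommMonoidWithOne R] {β : ι → Type*}
    [∀ i, DecidableEq (β i)] [∀ i, Zero (β i)] (c : ∀ i, β i) :
    (hammingNorm c : R) = ∑ i, if c i = 0 then 0 else 1 := by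
  simp only [hammingNorm, card_filter, Nat.cast_sum, Nat.cast_ite, ite_not, Nat.cast_zero,
    Nat.cast_one]

lemma dotProduct_self_modEq_hammingNorm (z : ι → ℤ) :
    z ⬝ᵥ z ≡ hammingNorm (modTwo z) [ZMOD 4] := by
  rw [natCast_hammingNorm]
  refine Int.ModEq.sum fun i _ => ?_
  simp only [modTwo, ZMod.intCast_eq_zero_iff_even]
  split_ifs with hi
  · obtain ⟨k, hk⟩ := hi.two_dvd
    exact Int.modEq_zero_iff_dvd.2 ⟨k * k, by rw [hk]; ring⟩
  · rw [← sq]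
    exact Int.sq_mod_four_eq_one_of_odd (Int.not_even_iff_odd.1 hi)

lemma four_dvd_dotProduct_self_iff {z : ι → ℤ} : 4 ∣ z ⬝ᵥ z ↔ 4 ∣ hammingNorm (modTwo z) := by
  rw [(dotProduct_self_modEq_hammingNorm z).dvd_iff]
  norm_cast

lemma hammingNorm_modTwo_le_dotProduct_self (z : ι → ℤ) :
    (hammingNorm (modTwo z) : ℤ) ≤ z ⬝ᵥ z := by
  rw [natCast_hammingNorm]
  exact sum_le_sum fun i _ => ite_modTwo_le_mul_self z i

end IntegerVectors

section ShortLifts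

variable {ι : Type*} [Fintype ι] [DecidableEq ι]

/-- The lifts of a binary word `c` to integer vectors with entries `±1` on the support of `c` and
`0` elsewhere, that is, its lifts of minimal length. -/
def signLifts (c : ι → ZMod 2) : Finset (ι → ℤ) :=
  Fintype.piFinset fun i => if c i = 0 then {0} else {1, -1}

lemma mem_signLifts {c : ι → ZMod 2} {z : ι → ℤ} :
    z ∈ signLifts c ↔ modTwo z = c ∧ z ⬝ᵥ z = hammingNorm c := by
  have hentry (i : ι) : (z i ∈ if c i = 0 then ({0} : Finset ℤ) else {1, -1}) ↔
      z i * z i = if c i = 0 then 0 else 1 := by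
    split_ifs <;> simp [mul_self_eq_one_iff]
  rw [signLifts, Fintype.mem_piFinset, forall_congr' hentry]
  have hsq : ∀ a b : ZMod 2, a * a = (if b = 0 then 0 else 1) → a = b := by decide
  constructor
  · intro h
    have hz : modTwo z = c := by
      funext i
      exact hsq _ _ (by rw [modTwo]; exact_mod_cast congrArg (Int.cast : ℤ → ZMod 2) (h i))
    exact ⟨hz, by rw [natCast_hammingNorm]; exact sum_congr rfl fun i _ => h i⟩
  · rintro ⟨rfl, h⟩ i
    rw [natCast_hammingNorm] at h
    have hle : ∀ j ∈ univ, (if modTwo z j = 0 then 0 else 1) ≤ z j * z j := fun j _ =>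
      ite_modTwo_le_mul_self z j
    exact ((sum_eq_sum_iff_of_le hle).1 h.symm i (mem_univ i)).symm

lemma pairwiseDisjoint_signLifts (s : Set (ι → ZMod 2)) : s.PairwiseDisjoint signLifts :=
  fun _ _ _ _ hcd => disjoint_left.2 fun _ hc hd =>
    hcd ((mem_signLifts.1 hc).1.symm.trans (mem_signLifts.1 hd).1)

lemma card_signLifts (c : ι → ZMod 2) : #(signLifts c) = 2 ^ hammingNorm c := by
  have hcard (i : ι) : #(if c i = 0 then {0} else {1, -1} : Finset ℤ) =
      if c i ≠ 0 then 2 else 1 := by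
    split_ifs <;> simp_all
  rw [signLifts, Fintype.card_piFinset, hammingNorm, ← prod_const, prod_filter]
  exact prod_congr rfl fun i _ => hcard i

/-- The integer vectors `±2 eᵢ`, which are the lifts of the zero word with `z • z = 4`. -/
def axisLifts (ι : Type*) [Fintype ι] [DecidableEq ι] : Finset (ι → ℤ) :=
  (univ ×ˢ {2, -2}).image fun p : ι × ℤ => Pi.single p.1 p.2

lemma eq_single_of_dotProduct_self_le {R : Type*} [Ring R] [LinearOrder R]
    [IsStrictOrderedRing R] {z : ι → R} {i : ι} (hz : z ⬝ᵥ z ≤ z i * z i) :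
    z = Pi.single i (z i) := by
  funext j
  obtain rfl | hj := eq_or_ne j i
  · rw [Pi.single_eq_same]
  have hpair : z i * z i + z j * z j ≤ z ⬝ᵥ z := by
    rw [← sum_pair (f := fun k => z k * z k) hj.symm]
    exact sum_le_univ_sum_of_nonneg fun k => mul_self_nonneg (z k)
  rw [Pi.single_eq_of_ne hj]
  exact mul_self_eq_zero.1
    (((add_le_iff_nonpos_right _).1 (hpair.trans hz)).antisymm (mul_self_nonneg (z j)))

lemma mem_axisLifts {z : ι → ℤ} : z ∈ axisLifts ι ↔ modTwo z = 0 ∧ z ⬝ᵥ z = 4 := by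
  simp only [axisLifts, mem_image, mem_product, mem_univ, true_and, mem_insert, mem_singleton,
    Prod.exists]
  constructor
  · rintro ⟨i, a, ha, rfl⟩
    rcases ha with rfl | rfl
    · exact ⟨modTwo_single even_two i, by simp⟩
    · exact ⟨modTwo_single even_two.neg i, by simp⟩
  · rintro ⟨hzero, hz⟩
    obtain ⟨i, hi⟩ : ∃ i, z i ≠ 0 := by
      by_contra! h
      simp [dotProduct, h] at hz
    have hle : z i * z i ≤ 4 :=
      hz ▸ single_le_sum (f := fun k => z k * z k) (fun k _ => mul_self_nonneg (z k)) (mem_univ i)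
    have hzi : z i = 2 ∨ z i = -2 := by
      obtain ⟨k, hk⟩ := (modTwo_eq_zero_iff.1 hzero i).two_dvd
      have hk1 : k ≤ 1 := by nlinarith
      have hk2 : -1 ≤ k := by nlinarith
      omega
    refine ⟨i, z i, hzi, (eq_single_of_dotProduct_self_le ?_).symm⟩
    rcases hzi with h | h <;> simp [hz, h]

lemma card_axisLifts : #(axisLifts ι) = 2 * Fintype.card ι := by
  rw [axisLifts, card_image_of_injOn, card_product, card_univ, card_pair (by norm_num), mul_comm]
  rintro ⟨i, a⟩ ha ⟨j, b⟩ - h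
  have ha0 : a ≠ 0 := by
    rintro rfl
    simp at ha
  have hij : i = j := by
    by_contra hne
    exact ha0 (by simpa [hne] using congrFun h i)
  subst hij
  exact congrArg _ (Pi.single_injective i h)

/-- The integer vectors with `z • z = 4` whose reduction lies in `C` (for `0 ∈ C`); divided by `√2`
they are the roots of `Γ_C`. -/
def rootLifts (C : Set (ι → ZMod 2)) [DecidablePred (· ∈ C)] : Finset (ι → ℤ) :=
  axisLifts ι ∪ ({c | c ∈ C ∧ hammingNorm c = 4} : Finset (ι → ZMod 2)).biUnion signLifts

variable {C : Set (ι → ZMod 2)} [DecidablePred (· ∈ C)]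

lemma mem_rootLifts (hC : 0 ∈ C) {z : ι → ℤ} :
    z ∈ rootLifts C ↔ modTwo z ∈ C ∧ z ⬝ᵥ z = 4 := by
  simp only [rootLifts, mem_union, mem_axisLifts, mem_biUnion, mem_filter_univ, mem_signLifts]
  constructor
  · rintro (⟨hz, h4⟩ | ⟨_, ⟨hc, hwt⟩, rfl, h4⟩)
    · exact ⟨hz ▸ hC, h4⟩
    · exact ⟨hc, by rw [h4, hwt]; rfl⟩
  · rintro ⟨hc, h4⟩
    have hwt : hammingNorm (modTwo z) = 0 ∨ hammingNorm (modTwo z) = 4 := by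
      have hmod := dotProduct_self_modEq_hammingNorm z
      have hle := hammingNorm_modTwo_le_dotProduct_self z
      rw [h4] at hmod hle
      rw [Int.ModEq] at hmod
      omega
    exact hwt.imp (fun h0 => ⟨hammingNorm_eq_zero.1 h0, h4⟩)
      fun hwt => ⟨_, ⟨hc, hwt⟩, rfl, by rw [h4, hwt]; rfl⟩

lemma card_rootLifts :
    #(rootLifts C) = 2 * Fintype.card ι + 16 * #{c | c ∈ C ∧ hammingNorm c = 4} := by
  have haxis : Disjoint (axisLifts ι)
      (({c | c ∈ C ∧ hammingNorm c = 4} : Finset (ι → ZMod 2)).biUnion signLifts) := by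
    simp only [disjoint_biUnion_right, mem_filter_univ]
    rintro c ⟨-, hc⟩
    refine disjoint_left.2 fun z hz hzc => ?_
    rw [← (mem_signLifts.1 hzc).1, (mem_axisLifts.1 hz).1, hammingNorm_zero] at hc
    exact absurd hc (by decide)
  have hcard : ∀ c ∈ ({c | c ∈ C ∧ hammingNorm c = 4} : Finset (ι → ZMod 2)),
      #(signLifts c) = 16 := by
    intro c hc
    rw [card_signLifts, (mem_filter_univ c).1 hc |>.2]
    rfl
  rw [rootLifts, card_union_of_disjoint haxis, card_axisLifts,
    card_biUnion (pairwiseDisjoint_signLifts _), sum_const_nat hcard, mul_comm 16]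

end ShortLifts

section DualCode

variable {R ι : Type*} [CommSemiring R] [Fintype ι]

/-- The dual code `C^⊥` with respect to the standard dot product. -/
def dualCode (C : Submodule R (ι → R)) : Submodule R (ι → R) :=
  C.orthogonalBilin (dotProductBilin R R)

lemma mem_dualCode {C : Submodule R (ι → R)} {y : ι → R} :
    y ∈ dualCode C ↔ ∀ c ∈ C, c ⬝ᵥ y = 0 :=
  Iff.rfl

lemma mem_dualCode_span {s : Set (ι → R)} {y : ι → R} :
    y ∈ dualCode (Submodule.span R s) ↔ ∀ c ∈ s, c ⬝ᵥ y = 0 :=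
  Submodule.span_le (p := ((dotProductBilin R R).flip y).ker)

end DualCode

section DoublyEven

variable {ι : Type*} [Fintype ι]

lemma four_dvd_hammingNorm_add {c d : ι → ZMod 2} (hc : 4 ∣ hammingNorm c)
    (hd : 4 ∣ hammingNorm d) (hcd : c ⬝ᵥ d = 0) : 4 ∣ hammingNorm (c + d) := by
  obtain ⟨z, rfl⟩ := modTwo_surjective c
  obtain ⟨w, rfl⟩ := modTwo_surjective d
  rw [modTwo_dotProduct, ZMod.intCast_eq_zero_iff_even] at hcd
  have hadd : modTwo z + modTwo w = modTwo (z + w) :=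
    funext fun i => (Int.cast_add (z i) (w i)).symm
  have hsq : (z + w) ⬝ᵥ (z + w) = z ⬝ᵥ z + 2 * (z ⬝ᵥ w) + w ⬝ᵥ w := by
    rw [add_dotProduct, dotProduct_add, dotProduct_add, dotProduct_comm w z]
    ring
  rw [← four_dvd_dotProduct_self_iff] at hc hd
  rw [hadd, ← four_dvd_dotProduct_self_iff, hsq]
  exact (hc.add (mul_dvd_mul_left 2 hcd.two_dvd)).add hd

lemma four_dvd_hammingNorm_of_mem_span {s : Set (ι → ZMod 2)}
    (hs : ∀ c ∈ s, 4 ∣ hammingNorm c)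
    (horth : Submodule.span (ZMod 2) s ≤ dualCode (Submodule.span (ZMod 2) s)) :
    ∀ c ∈ Submodule.span (ZMod 2) s, 4 ∣ hammingNorm c := by
  intro c hc
  induction hc using Submodule.span_induction with
  | mem c hc => exact hs c hc
  | zero => simp
  | add c d hc hd hc4 hd4 => exact four_dvd_hammingNorm_add hc4 hd4 (horth hd c hc)
  | smul a c _ hc4 =>
    obtain rfl | rfl : a = 0 ∨ a = 1 := by
      revert a
      decide
    · simp
    · rwa [one_smul]

end DoublyEven

section CodeLattice

variable {n : ℕ}

lemma codeLattice_eq_image (C : Set (Fin n → ZMod 2)) :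
    codeLattice C = divSqrtTwo '' (modTwo ⁻¹' C) := by
  ext x
  exact exists_congr fun z => and_congr_right fun _ => by rw [eq_comm, funext_iff]; rfl

theorem even_codeLattice {C : Set (Fin n → ZMod 2)} (hC : ∀ c ∈ C, 4 ∣ hammingNorm c) :
    ∀ x ∈ codeLattice C, ∃ m : ℤ, x ⬝ᵥ x = 2 * m := by
  rw [codeLattice_eq_image]
  rintro _ ⟨z, hz, rfl⟩
  obtain ⟨m, hm⟩ := four_dvd_dotProduct_self_iff.2 (hC _ hz)
  refine ⟨m, ?_⟩
  rw [divSqrtTwo_dotProduct, hm]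
  push_cast
  ring

lemma exists_divSqrtTwo_eq_of_forall_dotProduct {C : Set (Fin n → ZMod 2)} (hC : 0 ∈ C)
    {y : Fin n → ℝ} (hy : ∀ x ∈ codeLattice C, ∃ m : ℤ, y ⬝ᵥ x = m) :
    ∃ w, divSqrtTwo w = y := by
  have hcoord (i : Fin n) : ∃ m : ℤ, (m : ℝ) / √2 = y i := by
    have hmem : divSqrtTwo (Pi.single i 2) ∈ codeLattice C := by
      rw [codeLattice_eq_image]
      exact ⟨_, Set.mem_preimage.2 (modTwo_single even_two i ▸ hC), rfl⟩
    obtain ⟨m, hm⟩ := hy _ hmem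
    have hm : y i * (2 / √2) = m := by
      rw [← hm, divSqrtTwo_single, dotProduct_single, Int.cast_ofNat]
    refine ⟨m, ?_⟩
    rw [← hm, Real.div_sqrt, mul_div_cancel_right₀ _ (by positivity)]
  choose w hw using hcoord
  exact ⟨w, funext hw⟩

theorem dual_codeLattice (C : Submodule (ZMod 2) (Fin n → ZMod 2)) :
    {y : Fin n → ℝ | ∀ x ∈ codeLattice (C : Set (Fin n → ZMod 2)), ∃ m : ℤ, y ⬝ᵥ x = m} =
      codeLattice (dualCode C : Set (Fin n → ZMod 2)) := by
  have hlift (w : Fin n → ℤ) :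
      (∀ x ∈ codeLattice (C : Set (Fin n → ZMod 2)), ∃ m : ℤ, divSqrtTwo w ⬝ᵥ x = m) ↔
        modTwo w ∈ dualCode C := by
    simp only [codeLattice_eq_image, Set.forall_mem_image,
      exists_divSqrtTwo_dotProduct_eq_intCast_iff, Set.mem_preimage, SetLike.mem_coe, mem_dualCode,
      modTwo_surjective.forall, dotProduct_comm (modTwo w)]
  rw [codeLattice_eq_image (dualCode C : Set (Fin n → ZMod 2))]
  refine Set.Subset.antisymm (fun y hy => ?_) ?_
  · obtain ⟨w, rfl⟩ := exists_divSqrtTwo_eq_of_forall_dotProduct C.zero_mem hy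
    exact ⟨w, (hlift w).1 hy, rfl⟩
  · rintro _ ⟨w, hw, rfl⟩
    exact (hlift w).2 hw

variable {C : Set (Fin n → ZMod 2)} [DecidablePred (· ∈ C)]

theorem roots_codeLattice_eq_image (hC : 0 ∈ C) :
    {x | x ∈ codeLattice C ∧ x ⬝ᵥ x = 2} = divSqrtTwo '' (rootLifts C : Set (Fin n → ℤ)) := by
  have hnorm (z : Fin n → ℤ) : divSqrtTwo z ⬝ᵥ divSqrtTwo z = 2 ↔ z ⬝ᵥ z = 4 := by
    rw [divSqrtTwo_dotProduct, div_eq_iff two_ne_zero, show (2 * 2 : ℝ) = ((4 : ℤ) : ℝ) by norm_num,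
      Int.cast_inj]
  ext x
  rw [codeLattice_eq_image]
  constructor
  · rintro ⟨⟨z, hz, rfl⟩, hx⟩
    exact ⟨z, (mem_rootLifts hC).2 ⟨hz, (hnorm z).1 hx⟩, rfl⟩
  · rintro ⟨z, hz, rfl⟩
    obtain ⟨hzC, hz4⟩ := (mem_rootLifts hC).1 hz
    exact ⟨⟨z, hzC, rfl⟩, (hnorm z).2 hz4⟩

theorem ncard_roots_codeLattice (hC : 0 ∈ C) :
    {x | x ∈ codeLattice C ∧ x ⬝ᵥ x = 2}.ncard =
      2 * n + 16 * #{c | c ∈ C ∧ hammingNorm c = 4} := by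
  rw [roots_codeLattice_eq_image hC, Set.ncard_image_of_injective _ divSqrtTwo_injective,
    Set.ncard_coe_finset, card_rootLifts, Fintype.card_fin]

end CodeLattice

section ExtendedHammingCode

-- Each generator has a single `1` among the positions `3, 5, 6, 7`, so these carry the message and
-- the remaining four positions are parity checks.
lemma mem_extendedHammingCode_iff {c : Fin 8 → ZMod 2} :
    c ∈ extendedHammingCode ↔
      c 0 = c 3 + c 5 + c 6 ∧ c 1 = c 3 + c 5 + c 7 ∧ c 2 = c 3 + c 6 + c 7 ∧
        c 4 = c 5 + c 6 + c 7 := by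
  simp only [extendedHammingCode, Submodule.mem_span_insert, Submodule.mem_span_singleton]
  constructor
  · rintro ⟨a, _, ⟨b, _, ⟨d, _, ⟨e, rfl⟩, rfl⟩, rfl⟩, rfl⟩
    revert a b d e
    decide
  · rintro ⟨h0, h1, h2, h4⟩
    refine ⟨c 3, _, ⟨c 5, _, ⟨c 6, _, ⟨c 7, rfl⟩, rfl⟩, rfl⟩, ?_⟩
    funext i
    fin_cases i <;> simp [h0, h1, h2, h4] <;> ring

instance extendedHammingCode.decidablePredMem :
    DecidablePred (· ∈ (extendedHammingCode : Set (Fin 8 → ZMod 2))) :=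
  fun _ => decidable_of_iff _ mem_extendedHammingCode_iff.symm

lemma dualCode_extendedHammingCode : dualCode extendedHammingCode = extendedHammingCode := by
  ext c
  rw [mem_extendedHammingCode_iff, extendedHammingCode, mem_dualCode_span]
  simp only [Set.forall_mem_insert, Set.mem_singleton_iff, forall_eq]
  revert c
  decide +kernel

lemma four_dvd_hammingNorm_of_mem_extendedHammingCode :
    ∀ c ∈ extendedHammingCode, 4 ∣ hammingNorm c := by
  refine four_dvd_hammingNorm_of_mem_span ?_ dualCode_extendedHammingCode.ge
  simp only [Set.forall_mem_insert, Set.mem_singleton_iff, forall_eq]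
  decide

lemma card_extendedHammingCode_weight_four :
    #{c | c ∈ (extendedHammingCode : Set (Fin 8 → ZMod 2)) ∧ hammingNorm c = 4} = 14 := by
  decide +kernel

end ExtendedHammingCode

/-- The lattice `Γ_H` of the extended Hamming code is even, unimodular, and has
exactly `240` roots: this is the number of roots of the root system `E₈`. -/
theorem extendedHamming_lattice_even_unimodular_roots :
    (∀ x ∈ codeLattice (extendedHammingCode : Set (Fin 8 → ZMod 2)),
        ∃ m : ℤ, ∑ i, x i * x i = 2 * (m : ℝ)) ∧
      codeLattice (extendedHammingCode : Set (Fin 8 → ZMod 2)) =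
        {y : Fin 8 → ℝ | ∀ x ∈ codeLattice (extendedHammingCode : Set (Fin 8 → ZMod 2)),
          ∃ m : ℤ, ∑ i, y i * x i = (m : ℝ)} ∧
      ({x : Fin 8 → ℝ | x ∈ codeLattice (extendedHammingCode : Set (Fin 8 → ZMod 2)) ∧
          ∑ i, x i * x i = 2}.Finite ∧
        {x : Fin 8 → ℝ | x ∈ codeLattice (extendedHammingCode : Set (Fin 8 → ZMod 2)) ∧
          ∑ i, x i * x i = 2}.ncard = 240) := by
  have hzero : 0 ∈ (extendedHammingCode : Set (Fin 8 → ZMod 2)) := extendedHammingCode.zero_mem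
  have hdual := dual_codeLattice extendedHammingCode
  rw [dualCode_extendedHammingCode] at hdual
  have hcard := ncard_roots_codeLattice hzero
  rw [card_extendedHammingCode_weight_four] at hcard
  exact ⟨even_codeLattice four_dvd_hammingNorm_of_mem_extendedHammingCode, hdual.symm,
    Set.finite_of_ncard_ne_zero (hcard ▸ by decide), hcard⟩
end

section
/- Let 𝔤 be a finite-dimensional semisimple Lie algebra over an algebraically closed field K of characteristic 0, 𝔥 a Cartan subalgebra, and α a root of 𝔤 relative to 𝔥. Then S_α = 𝔤_α + 𝔤_{−α} + [𝔤_α, 𝔤_{−α}] is a Lie subalgebra of 𝔤 of dimension 3, isomorphic as a Lie algebra to 𝔰𝔩₂(K), the Lie algebra of 2×2 trace-zero matrices over K. -/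
/-- The simultaneous eigenspace `𝔤_γ = {x ∈ 𝔤 : [h,x] = γ(h)x for all h ∈ 𝔥}`
of a subalgebra `𝔥` of a Lie algebra `𝔤`, for a linear functional `γ` on `𝔥`. -/
def simRootSpace {K L : Type*} [CommRing K] [LieRing L] [LieAlgebra K L]
    (H : LieSubalgebra K L) (γ : Module.Dual K H) : Submodule K L where
  carrier := {x | ∀ h : H, ⁅(h : L), x⁆ = γ h • x}
  add_mem' := by
    intro a b ha hb h
    rw [lie_add, ha h, hb h, smul_add]
  zero_mem' := by
    intro h
    rw [lie_zero, smul_zero]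
  smul_mem' := by
    intro t x hx h
    rw [lie_smul, hx h, smul_comm]

/-- The subspace `S_γ = 𝔤_γ + 𝔤_{-γ} + [𝔤_γ, 𝔤_{-γ}]` attached to `γ`. -/
def rootSl2 {K L : Type*} [CommRing K] [LieRing L] [LieAlgebra K L]
    (H : LieSubalgebra K L) (γ : Module.Dual K H) : Submodule K L :=
  simRootSpace H γ ⊔ simRootSpace H (-γ) ⊔
    Submodule.span K
      {z | ∃ x ∈ simRootSpace H γ, ∃ y ∈ simRootSpace H (-γ), z = ⁅x, y⁆}

/-!
Root spaces of a split semisimple Lie algebra are genuine eigenspaces and, away from the zero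
weight, lines. Choose an `sl₂`-triple `(h, e, f)` with `e ∈ 𝔤_α` and `f ∈ 𝔤_{-α}`: then `e` and
`f` span the two root spaces and `h = ⁅e, f⁆` spans their bracket, so `S_α` is the span of the
triple. The elements `h`, `e`, `f` are eigenvectors of `ad h` for the distinct eigenvalues `0`,
`2`, `-2`, hence linearly independent, and mapping the standard basis of `𝔰𝔩₂` onto them is an
isomorphism onto `S_α`.
-/

open LieAlgebra LieModule Module Submodule
open SpecialLinear (sl)

section Sl2Triple

variable {R L : Type*} [CommRing R] [LieRing L] [LieAlgebra R L] {h e f : L}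

lemma linearIndependent_of_isSl2Triple [IsDomain R] [NeZero (2 : R)] [IsTorsionFree R L]
    (t : IsSl2Triple h e f) : LinearIndependent R ![h, e, f] := by
  have two_ne_neg_two : (2 : R) ≠ -2 := fun h2 ↦
    mul_ne_zero two_ne_zero two_ne_zero (by linear_combination h2 : (2 : R) * 2 = 0)
  refine End.eigenvectors_linearIndependent' (ad R L h) ![0, 2, -2] ?_ _ fun i ↦ ?_
  · intro i j hij
    fin_cases i <;> fin_cases j <;> simp_all [eq_comm (a := (0 : R)), two_ne_neg_two.symm]
  · rw [End.hasEigenvector_iff, End.mem_eigenspace_iff]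
    fin_cases i
    · simp [t.h_ne_zero]
    · simp [t.lie_h_e_smul R, t.e_ne_zero]
    · simp [t.lie_lie_smul_f R, t.f_ne_zero]

lemma finrank_toLieSubalgebra_of_isSl2Triple [IsDomain R] [NeZero (2 : R)] [IsTorsionFree R L]
    (t : IsSl2Triple h e f) : finrank R (t.toLieSubalgebra R) = 3 := by
  have range_eq : Set.range ![h, e, f] = {e, f, h} := by
    simp [Matrix.range_cons, Set.insert_comm]
  have span_eq : (t.toLieSubalgebra R).toSubmodule = span R (Set.range ![h, e, f]) := by
    rw [range_eq, IsSl2Triple.toLieSubalgebra]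
  exact (congrArg (fun p : Submodule R L ↦ finrank R p) span_eq).trans
    (finrank_span_eq_card (linearIndependent_of_isSl2Triple t))

lemma sl_fin_two_apply_one_one (A : sl (Fin 2) R) : A.1 1 1 = -A.1 0 0 := by
  have trace_eq_zero : A.1.trace = 0 := A.2
  rw [Matrix.trace_fin_two] at trace_eq_zero
  linear_combination trace_eq_zero

/-- The homomorphism from `𝔰𝔩₂` sending the standard triple `(H, E, F)` to a given `sl₂`-triple
`(h, e, f)`, in the coordinates given by the entries `A₀₀`, `A₀₁`, `A₁₀`. -/
def sl2Hom (t : IsSl2Triple h e f) : sl (Fin 2) R →ₗ⁅R⁆ L where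
  toFun A := A.1 0 0 • h + A.1 0 1 • e + A.1 1 0 • f
  map_add' A B := by
    simp only [AddMemClass.coe_add, Matrix.add_apply]
    module
  map_smul' c A := by
    simp only [SetLike.val_smul, Matrix.smul_apply, RingHom.id_apply]
    module
  map_lie' {A B} := by
    have lie_f_e : ⁅f, e⁆ = -h := by rw [← lie_skew, t.lie_e_f]
    have lie_e_h : ⁅e, h⁆ = -((2 : R) • e) := by rw [← lie_skew, t.lie_h_e_smul R]
    have lie_f_h : ⁅f, h⁆ = (2 : R) • f := by rw [← lie_skew, t.lie_lie_smul_f R, neg_neg]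
    simp only [LieSubalgebra.coe_bracket, Ring.lie_def, Matrix.sub_apply, Matrix.mul_apply,
      Fin.sum_univ_two, sl_fin_two_apply_one_one, add_lie, lie_add, smul_lie, lie_smul, lie_self,
      t.lie_e_f, t.lie_h_e_smul R, t.lie_lie_smul_f R, lie_f_e, lie_e_h, lie_f_h]
    module

lemma sl2Hom_apply (t : IsSl2Triple h e f) (A : sl (Fin 2) R) :
    sl2Hom t A = A.1 0 0 • h + A.1 0 1 • e + A.1 1 0 • f :=
  rfl

lemma sl2Hom_injective [IsDomain R] [NeZero (2 : R)] [IsTorsionFree R L]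
    (t : IsSl2Triple h e f) : Function.Injective (sl2Hom (R := R) t) := by
  refine (injective_iff_map_eq_zero _).2 fun A hA ↦ ?_
  have entry_eq_zero := Fintype.linearIndependent_iff.1 (linearIndependent_of_isSl2Triple t)
    ![A.1 0 0, A.1 0 1, A.1 1 0] (by simpa [Fin.sum_univ_three, sl2Hom_apply] using hA)
  have h00 : A.1 0 0 = 0 := entry_eq_zero 0
  have h01 : A.1 0 1 = 0 := entry_eq_zero 1
  have h10 : A.1 1 0 = 0 := entry_eq_zero 2
  ext i j
  fin_cases i <;> fin_cases j <;> simp [h00, h01, h10, sl_fin_two_apply_one_one]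

lemma range_sl2Hom (t : IsSl2Triple h e f) : (sl2Hom t).range = t.toLieSubalgebra R := by
  ext x
  rw [LieHom.mem_range, IsSl2Triple.mem_toLieSubalgebra_iff, t.lie_e_f]
  constructor
  · rintro ⟨A, rfl⟩
    exact ⟨A.1 0 1, A.1 1 0, A.1 0 0, by rw [sl2Hom_apply]; abel⟩
  · rintro ⟨a, b, c, rfl⟩
    refine ⟨⟨!![c, a; b, -c], (Matrix.trace_fin_two _).trans (add_neg_cancel c)⟩, ?_⟩
    simp only [sl2Hom_apply, Matrix.of_apply, Matrix.cons_val]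
    abel

/-- The Lie subalgebra spanned by an `sl₂`-triple is a copy of `𝔰𝔩₂`, via `sl2Hom`. -/
noncomputable def toLieSubalgebraEquivSl2 [IsDomain R] [NeZero (2 : R)] [IsTorsionFree R L]
    (t : IsSl2Triple h e f) : t.toLieSubalgebra R ≃ₗ⁅R⁆ sl (Fin 2) R :=
  ((LieEquiv.ofInjective _ (sl2Hom_injective t)).trans
    (LieEquiv.ofEq _ _ (congrArg _ (range_sl2Hom t)))).symm

lemma toLieSubalgebra_eq_rootSl2 (t : IsSl2Triple h e f) {H : LieSubalgebra R L}
    {γ : Dual R H} (he : simRootSpace H γ = R ∙ e) (hf : simRootSpace H (-γ) = R ∙ f) :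
    (t.toLieSubalgebra R).toSubmodule = rootSl2 H γ := by
  have span_lie : span R {z | ∃ x ∈ R ∙ e, ∃ y ∈ R ∙ f, z = ⁅x, y⁆} = R ∙ h := by
    refine le_antisymm (span_le.2 ?_) (span_mono ?_)
    · rintro _ ⟨x, hx, y, hy, rfl⟩
      obtain ⟨a, rfl⟩ := mem_span_singleton.1 hx
      obtain ⟨b, rfl⟩ := mem_span_singleton.1 hy
      rw [smul_lie, lie_smul, t.lie_e_f]
      exact smul_mem _ _ (smul_mem _ _ (mem_span_singleton_self h))
    · rintro _ rfl
      exact ⟨e, mem_span_singleton_self e, f, mem_span_singleton_self f, t.lie_e_f.symm⟩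
  calc span R {e, f, h} = (R ∙ e) ⊔ (R ∙ f) ⊔ (R ∙ h) := by rw [span_insert, span_insert, sup_assoc]
    _ = rootSl2 H γ := by rw [rootSl2, he, hf, span_lie]

end Sl2Triple

lemma simRootSpace_le_rootSpace {R L : Type*} [CommRing R] [LieRing L] [LieAlgebra R L]
    (H : LieSubalgebra R L) [LieRing.IsNilpotent H] (γ : Dual R H) :
    simRootSpace H γ ≤ (rootSpace H γ).toSubmodule :=
  fun _ hx ↦ weightSpace_le_genWeightSpace L γ ((mem_weightSpace _ _).2 hx)

lemma exists_weight_toLinear_eq_of_simRootSpace_ne_bot {R L : Type*} [CommRing R] [LieRing L]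
    [LieAlgebra R L] {H : LieSubalgebra R L} [LieRing.IsNilpotent H] [LinearWeights R H L]
    {γ : Dual R H} (hγ : simRootSpace H γ ≠ ⊥) : ∃ w : Weight R H L, w.toLinear = γ := by
  have rootSpace_ne_bot : rootSpace H γ ≠ ⊥ := fun hbot ↦
    hγ (le_bot_iff.1 ((simRootSpace_le_rootSpace H γ).trans_eq (by rw [hbot]; rfl)))
  exact ⟨⟨γ, rootSpace_ne_bot⟩, rfl⟩

section SplitSemisimple

variable {K L : Type*} [Field K] [LieRing L] [LieAlgebra K L] [Module.Finite K L] [IsKilling K L]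
  {H : LieSubalgebra K L} [H.IsCartanSubalgebra] [IsTriangularizable K H L]

lemma simRootSpace_eq_rootSpace [PerfectField K] (γ : Dual K H) :
    simRootSpace H γ = (rootSpace H γ).toSubmodule :=
  (simRootSpace_le_rootSpace H γ).antisymm
    fun _ hx h ↦ IsKilling.lie_eq_smul_of_mem_rootSpace hx h

lemma simRootSpace_toLinear_eq_span_singleton [CharZero K] {w : Weight K H L} (hw : w.IsNonZero)
    {x : L} (hx : x ∈ rootSpace H w) (hx₀ : x ≠ 0) : simRootSpace H w.toLinear = K ∙ x := by
  rw [simRootSpace_eq_rootSpace]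
  refine (eq_of_le_of_finrank_eq ((span_singleton_le_iff_mem _ _).2 hx) ?_).symm
  exact (finrank_span_singleton hx₀).trans (IsKilling.finrank_rootSpace_eq_one w hw).symm

lemma exists_isSl2Triple_simRootSpace_eq_span_singleton [CharZero K] {α : Dual K H} (hα : α ≠ 0)
    (hα' : simRootSpace H α ≠ ⊥) :
    ∃ h e f : L, IsSl2Triple h e f ∧ simRootSpace H α = K ∙ e ∧ simRootSpace H (-α) = K ∙ f := by
  obtain ⟨w, rfl⟩ := exists_weight_toLinear_eq_of_simRootSpace_ne_bot hα'
  have hw : w.IsNonZero := Weight.coe_toLinear_ne_zero_iff.1 hα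
  obtain ⟨h, e, f, t, he, hf⟩ := IsKilling.exists_isSl2Triple_of_weight_isNonZero hw
  refine ⟨h, e, f, t, simRootSpace_toLinear_eq_span_singleton hw he t.e_ne_zero, ?_⟩
  rw [← Weight.toLinear_neg]
  exact simRootSpace_toLinear_eq_span_singleton hw.neg hf t.f_ne_zero

end SplitSemisimple

theorem rootSl2_isomorphic_sl2_general
    {K L : Type*} [Field K] [CharZero K] [LieRing L] [LieAlgebra K L] [Module.Finite K L]
    [IsKilling K L] (H : LieSubalgebra K L) [H.IsCartanSubalgebra] [IsTriangularizable K H L]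
    (α : Dual K H) (hα : α ≠ 0 ∧ simRootSpace H α ≠ ⊥) :
    ∃ S : LieSubalgebra K L, S.toSubmodule = rootSl2 H α ∧
      finrank K S = 3 ∧ Nonempty (S ≃ₗ⁅K⁆ sl (Fin 2) K) := by
  obtain ⟨h, e, f, t, he, hf⟩ := exists_isSl2Triple_simRootSpace_eq_span_singleton hα.1 hα.2
  exact ⟨t.toLieSubalgebra K, toLieSubalgebra_eq_rootSl2 t he hf,
    finrank_toLieSubalgebra_of_isSl2Triple t, ⟨toLieSubalgebraEquivSl2 t⟩⟩

/-- For a root `α` of a finite-dimensional semisimple Lie algebra over an algebraically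
closed field of characteristic `0`, relative to a Cartan subalgebra, the subspace
`S_α = 𝔤_α + 𝔤_{-α} + [𝔤_α, 𝔤_{-α}]` is a `3`-dimensional Lie subalgebra isomorphic
to `𝔰𝔩₂(K)`. -/
theorem rootSl2_isomorphic_sl2
    {K L : Type*} [Field K] [IsAlgClosed K] [CharZero K]
    [LieRing L] [LieAlgebra K L] [Module.Finite K L]
    [LieAlgebra.IsSemisimple K L]
    (H : LieSubalgebra K L) [H.IsCartanSubalgebra]
    (α : Module.Dual K H)
    (hα : α ≠ 0 ∧ simRootSpace H α ≠ ⊥) :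
    ∃ S : LieSubalgebra K L, S.toSubmodule = rootSl2 H α ∧
      Module.finrank K S = 3 ∧
      Nonempty (S ≃ₗ⁅K⁆ LieAlgebra.SpecialLinear.sl (Fin 2) K) :=
  rootSl2_isomorphic_sl2_general H α hα
end
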